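/- Let L be a first-order language, n ∈ ℕ, and let M and N be L-structures. Then Th_{∀ₙ∃}(M) ⊆ Th_{∀ₙ∃}(N) if and only if: for every n-tuple (b₁,…,bₙ) of elements of N there exist an L-structure N_b together with an existentially closed L-embedding N → N_b, an L-structure M_b with Th_{∀ₙ∃}(M_b) = Th_{∀ₙ∃}(M), and an L-embedding f : M_b → N_b such that b₁,…,bₙ (viewed in N_b) all lie in the image of f. -/

import Mathlib

open FirstOrder Language

universe u v w x

/-- Apply existential quantifiers to the last `s` bound variables of a bounded formula. -/
def FirstOrder.Language.BoundedFormula.exsN {L : FirstOrder.Language} {α : Type*} {m : ℕ} :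
    ∀ {s : ℕ}, L.BoundedFormula α (m + s) → L.BoundedFormula α m
  | 0, φ => φ
  | _ + 1, φ => φ.ex.exsN

/-- `Th_{∀ₙ∃}(M) ⊆ Th_{∀ₙ∃}(N)`: every sentence of the form `∀ x₁ … xₙ ∃ y₁ … yₛ ψ` with `ψ`
quantifier-free that holds in `M` also holds in `N`. -/
def AnETheorySub (L : FirstOrder.Language) (n : ℕ) (M : Type*) (N : Type*)
    [L.Structure M] [L.Structure N] : Prop :=
  ∀ (s : ℕ) (ψ : L.BoundedFormula Empty (n + s)), ψ.IsQF →
    M ⊨ (ψ.exsN.alls : L.Sentence) → N ⊨ (ψ.exsN.alls : L.Sentence)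

/-- An embedding `f : M ↪ N` is existentially closed: every existential formula with
parameters from `M` that holds in `N` (at the images of the parameters) holds in `M`. -/
def IsECEmbedding {L : FirstOrder.Language} {M N : Type*} [L.Structure M] [L.Structure N]
    (f : M ↪[L] N) : Prop :=
  ∀ (k s : ℕ) (ψ : L.BoundedFormula (Fin k) s), ψ.IsQF → ∀ a : Fin k → M,
    (ψ.exs : L.Formula (Fin k)).Realize (fun i => f (a i)) →
      (ψ.exs : L.Formula (Fin k)).Realize a

/-!
Both sides are controlled by one relation: a tuple `c` of `M_b` and a tuple `b` of `N` such that
every existential formula true of `c` is true of `b`. Such a pair arises from an amalgam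
`M_b → N_b ← N` identifying `c` with `b` and existentially closed on the side of `N`; conversely
the quantifier-free diagram of `(M_b, c)` is finitely satisfiable in `(N, b)`, so an ultrapower of
`N` provides the amalgam. Given `b`, an `M_b` and `c` are found in an ultrapower of `M`: otherwise
finitely many existential formulas false of `b` would cover `Mⁿ`, and their disjunction would
contradict `Th_{∀ₙ∃}(M) ⊆ Th_{∀ₙ∃}(N)`.
-/

open BoundedFormula Filter

universe y

section QuantifierFree

variable {L : FirstOrder.Language.{u, v}} {α β ι : Type*} {m : ℕ}

theorem isQF_restrictFreeVar [DecidableEq α] {φ : L.BoundedFormula α m} (hφ : φ.IsQF) :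
    ∀ f : φ.freeVarFinset → β, (φ.restrictFreeVar f).IsQF := by
  induction hφ with
  | falsum => exact fun _ => .falsum
  | of_isAtomic h =>
    cases h with
    | equal t₁ t₂ => exact fun _ => (IsAtomic.equal _ _).isQF
    | rel R ts => exact fun _ => (IsAtomic.rel _ _).isQF
  | imp _ _ ih₁ ih₂ => exact fun _ => (ih₁ _).imp (ih₂ _)

theorem isQF_toFormula {φ : L.BoundedFormula α m} (hφ : φ.IsQF) : φ.toFormula.IsQF := by
  induction hφ with
  | falsum => exact .falsum
  | of_isAtomic h =>
    cases h with
    | equal t₁ t₂ => exact (IsAtomic.equal _ _).isQF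
    | rel R ts => exact (IsAtomic.rel _ _).isQF
  | imp _ _ ih₁ ih₂ => exact ih₁.imp ih₂

theorem isQF_foldr_sup {l : List (L.BoundedFormula α m)} (hl : ∀ φ ∈ l, φ.IsQF) :
    (l.foldr (· ⊔ ·) ⊥).IsQF :=
  List.foldrRecOn l _ isQF_bot fun _ hψ φ hφ => (hl φ hφ).sup hψ

theorem isQF_foldr_inf {l : List (L.BoundedFormula α m)} (hl : ∀ φ ∈ l, φ.IsQF) :
    (l.foldr (· ⊓ ·) ⊤).IsQF :=
  List.foldrRecOn l _ IsQF.top fun _ hψ φ hφ => (hl φ hφ).inf hψ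

theorem isQF_iSup [Finite ι] {φ : ι → L.Formula α} (hφ : ∀ i, (φ i).IsQF) :
    (Formula.iSup φ).IsQF :=
  isQF_foldr_sup (by simpa using hφ)

theorem isQF_iInf [Finite ι] {φ : ι → L.Formula α} (hφ : ∀ i, (φ i).IsQF) :
    (Formula.iInf φ).IsQF :=
  isQF_foldr_inf (by simpa using hφ)

end QuantifierFree

section PrefixForm

variable {L : FirstOrder.Language.{u, v}} {α M N : Type*} [L.Structure M] [L.Structure N]
  {m n s : ℕ}

theorem realize_exsN (ψ : L.BoundedFormula α (m + s)) (v : α → M) (xs : Fin m → M) :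
    ψ.exsN.Realize v xs ↔ ∃ ys : Fin s → M, ψ.Realize v (Fin.append xs ys) := by
  induction s with
  | zero =>
    rw [Unique.exists_iff, Fin.append_right_nil _ _ rfl]
    rfl
  | succ s ih =>
    rw [exsN, ih ψ.ex, ← (Fin.snocEquiv fun _ => M).exists_congr_right, Prod.exists, exists_comm]
    simp only [realize_ex, ← Fin.append_snoc]
    rfl

theorem realize_alls_exsN (ψ : L.BoundedFormula Empty (n + s)) :
    M ⊨ (ψ.exsN.alls : L.Sentence) ↔
      ∀ xs : Fin n → M, ∃ ys : Fin s → M, ψ.Realize default (Fin.append xs ys) :=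
  realize_alls.trans (forall_congr' fun _ => realize_exsN ψ _ _)

/-- The bounded formula obtained by binding the variables in `Fin s` of a formula; a one-sided
inverse of `BoundedFormula.toFormula` up to equivalence. -/
def ofFormula (θ : L.Formula (α ⊕ Fin s)) : L.BoundedFormula α s :=
  BoundedFormula.relabel (k := 0) id θ

theorem realize_ofFormula (θ : L.Formula (α ⊕ Fin s)) (x : α → M) (y : Fin s → M) :
    (ofFormula θ).Realize x y ↔ θ.Realize (Sum.elim x y) := by
  refine (realize_relabel (m := s) (n := 0)).trans ?_
  rw [Formula.Realize, ← Subsingleton.elim (y ∘ Fin.natAdd s) default]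
  rfl

/-- The two blocks of variables of a `∀ₙ∃` formula, identified with the variables of the kernel of
the corresponding sentence, which has no free variables. -/
def prefixVars (n s : ℕ) : Fin n ⊕ Fin s ≃ Empty ⊕ Fin (n + s) :=
  finSumFinEquiv.trans (Equiv.emptySum Empty _).symm

theorem sumElim_append_comp_prefixVars (x : Fin n → M) (y : Fin s → M) :
    Sum.elim default (Fin.append x y) ∘ prefixVars n s = Sum.elim x y := by
  ext (i | i) <;> simp [prefixVars]

theorem realize_ofFormula_relabel_prefixVars (θ : L.Formula (Fin n ⊕ Fin s)) (x : Fin n → M)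
    (y : Fin s → M) :
    (ofFormula (θ.relabel (prefixVars n s))).Realize default (Fin.append x y) ↔
      θ.Realize (Sum.elim x y) := by
  rw [realize_ofFormula, Formula.realize_relabel, sumElim_append_comp_prefixVars]

theorem realize_toFormula_relabel_prefixVars_symm (ψ : L.BoundedFormula Empty (n + s))
    (x : Fin n → M) (y : Fin s → M) :
    (ψ.toFormula.relabel (prefixVars n s).symm).Realize (Sum.elim x y) ↔
      ψ.Realize default (Fin.append x y) := by
  rw [Formula.realize_relabel, ← sumElim_append_comp_prefixVars, Function.comp_assoc,
    Equiv.self_comp_symm, Function.comp_id, realize_toFormula, Sum.elim_comp_inl,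
    Sum.elim_comp_inr]

theorem anETheorySub_iff :
    AnETheorySub L n M N ↔ ∀ (s : ℕ) (θ : L.Formula (Fin n ⊕ Fin s)), θ.IsQF →
      (∀ a : Fin n → M, ∃ y : Fin s → M, θ.Realize (Sum.elim a y)) →
        ∀ b : Fin n → N, ∃ y : Fin s → N, θ.Realize (Sum.elim b y) := by
  simp only [AnETheorySub, realize_alls_exsN]
  constructor
  · intro H s θ hθ
    simpa only [realize_ofFormula_relabel_prefixVars] using
      H s (ofFormula (θ.relabel (prefixVars n s))) ((hθ.relabel _).relabel _)
  · intro H s ψ hψ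
    simpa only [realize_toFormula_relabel_prefixVars_symm] using
      H s (ψ.toFormula.relabel (prefixVars n s).symm) ((isQF_toFormula hψ).relabel _)

end PrefixForm

section ExistentialTypes

variable {L : FirstOrder.Language.{u, v}} {α β M N P : Type*}
  [L.Structure M] [L.Structure N] [L.Structure P] {n : ℕ}

variable (L) in
/-- The existential type of the tuple `a` of `M` is contained in that of the tuple `b` of `N`.
Existential formulas are represented by a quantifier-free formula `θ` whose variables in `Fin s`
are the quantified ones. -/
def ExTypeSub (a : α → M) (b : α → N) : Prop :=
  ∀ (s : ℕ) (θ : L.Formula (α ⊕ Fin s)), θ.IsQF →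
    (∃ y : Fin s → M, θ.Realize (Sum.elim a y)) → ∃ y : Fin s → N, θ.Realize (Sum.elim b y)

theorem ExTypeSub.trans {a : α → M} {b : α → N} {c : α → P} (hab : ExTypeSub L a b)
    (hbc : ExTypeSub L b c) : ExTypeSub L a c :=
  fun s θ hθ h => hbc s θ hθ (hab s θ hθ h)

theorem exTypeSub_embedding_comp (f : M ↪[L] N) (a : α → M) : ExTypeSub L a (f ∘ a) := by
  rintro s θ hθ ⟨y, hy⟩
  refine ⟨f ∘ y, ?_⟩
  rw [← Sum.comp_elim, Formula.Realize, ← Subsingleton.elim (f ∘ default) default]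
  exact (hθ.realize_embedding f).2 hy

theorem isECEmbedding_iff {f : M ↪[L] N} :
    IsECEmbedding f ↔ ∀ (k : ℕ) (a : Fin k → M), ExTypeSub L (f ∘ a) a := by
  simp only [IsECEmbedding, realize_exs]
  constructor
  · intro H k a s θ hθ
    simpa only [realize_ofFormula, Function.comp_def] using H k s (ofFormula θ) (hθ.relabel _) a
  · intro H k s ψ hψ a
    simpa only [realize_toFormula, Function.comp_def, Sum.elim_inl, Sum.elim_inr] using
      H k a s ψ.toFormula (isQF_toFormula hψ)

theorem IsECEmbedding.exTypeSub {h : N ↪[L] P} (hh : IsECEmbedding h) {f : M ↪[L] P}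
    {c : Fin n → M} {b : Fin n → N} (hcb : f ∘ c = h ∘ b) : ExTypeSub L c b :=
  (exTypeSub_embedding_comp f c).trans (hcb ▸ isECEmbedding_iff.1 hh n b)

theorem ExTypeSub.exists_realize {a : α → M} {b : α → N} (H : ExTypeSub L a b)
    {θ : L.Formula (α ⊕ β)} (hθ : θ.IsQF) {y : β → M} (hy : θ.Realize (Sum.elim a y)) :
    ∃ z : β → N, θ.Realize (Sum.elim b z) := by
  classical
  have nonempty_of_var (j : β) : Nonempty N :=
    (H 1 ⊤ IsQF.top ⟨fun _ => y j, id⟩).nonempty.map fun z => z 0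
  let e := (BoundedFormula.freeVarFinset θ).equivFin
  let toFin : BoundedFormula.freeVarFinset θ → α ⊕ Fin _ := fun i => i.1.map id fun _ => e i
  obtain ⟨z, hz⟩ := H _ (θ.restrictFreeVar toFin) (isQF_restrictFreeVar hθ _)
    ⟨fun j => Sum.elim a y (e.symm j),
      (realize_restrictFreeVar (Sum.elim a y) (by rintro ⟨_ | _, _⟩ <;> simp [toFin])).2 hy⟩
  refine ⟨fun j => if hj : Sum.inr j ∈ BoundedFormula.freeVarFinset θ then z (e ⟨_, hj⟩)
    else (nonempty_of_var j).some, (realize_restrictFreeVar _ ?_).1 hz⟩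
  rintro ⟨_ | _, hj⟩ <;> simp [toFin, hj]

theorem AnETheorySub.exists_forall_not_realize {ι : Type*} [Finite ι] (H : AnETheorySub L n M N)
    (b : Fin n → N) {s : ι → ℕ} {θ : ∀ i, L.Formula (Fin n ⊕ Fin (s i))} (hθ : ∀ i, (θ i).IsQF)
    (hb : ∀ i, ¬∃ y : Fin (s i) → N, (θ i).Realize (Sum.elim b y)) :
    ∃ a : Fin n → M, ∀ i, ¬∃ y : Fin (s i) → M, (θ i).Realize (Sum.elim a y) := by
  rw [anETheorySub_iff] at H
  rcases isEmpty_or_nonempty M with hM | hM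
  -- An existential quantifier over `∅` does not commute with `∨`, but there is only one `a`.
  · obtain ⟨a⟩ : Nonempty (Fin n → M) := by
      by_contra hM
      exact (H 0 ⊥ isQF_bot (fun a => (hM ⟨a⟩).elim) b).elim fun _ h => h
    exact ⟨a, fun i hi => hb i (H _ _ (hθ i) (fun a' => Subsingleton.elim a a' ▸ hi) b)⟩
  obtain ⟨S, hS⟩ := (Set.finite_range s).bddAbove
  replace hS (i : ι) : s i ≤ S := hS ⟨i, rfl⟩
  let χ : L.Formula (Fin n ⊕ Fin S) :=
    Formula.iSup fun i => (θ i).relabel (Sum.map id (Fin.castLE (hS i)))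
  have hχ : χ.IsQF := isQF_iSup fun i => (hθ i).relabel _
  by_contra! hcover
  obtain ⟨y, hy⟩ := H S χ hχ (fun a => by
    obtain ⟨i, y, hy⟩ := hcover a
    refine ⟨Function.extend (Fin.castLE (hS i)) y fun _ => Classical.arbitrary M, ?_⟩
    refine Formula.realize_iSup.2 ⟨i, Formula.realize_relabel.2 ?_⟩
    rwa [Sum.elim_comp_map, Function.comp_id, Function.extend_comp (Fin.castLE_injective _)]) b
  obtain ⟨i, hi⟩ := Formula.realize_iSup.1 hy
  rw [Formula.realize_relabel, Sum.elim_comp_map, Function.comp_id] at hi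
  exact hb i ⟨_, hi⟩

end ExistentialTypes

section Ultraproducts

variable {L : FirstOrder.Language.{u, v}} {α β ι : Type*} {U : Ultrafilter ι}

theorem exists_rep_ultraproduct {K : ι → Type*} (y : α → (U : Filter ι).Product K) :
    ∃ x : α → ∀ i, K i, (fun a => (x a : (U : Filter ι).Product K)) = y :=
  ⟨fun a => (y a).out, funext fun a => Quotient.out_eq' (y a)⟩

section

variable {K : ι → Type*} [∀ i, L.Structure (K i)]

-- `Ultraproduct.realize_formula_cast` requires nonempty factors.
theorem realize_ultraproduct_iff {φ : L.Formula α} (hφ : φ.IsQF) (x : α → ∀ i, K i) :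
    (φ.Realize fun a => (x a : (U : Filter ι).Product K)) ↔
      ∀ᶠ i in U, φ.Realize fun a => x a i := by
  let x' : α ⊕ Fin 0 → ∀ i, K i := Sum.elim x default
  have elim_cast : Sum.elim (fun a => (x a : (U : Filter ι).Product K)) default =
      fun a => (x' a : (U : Filter ι).Product K) := by
    ext (a | j)
    exacts [rfl, j.elim0]
  have elim_apply (i : ι) : Sum.elim (fun a => x a i) default = fun a => x' a i := by
    ext (a | j)
    exacts [rfl, j.elim0]
  induction hφ with
  | falsum => exact eventually_const.symm
  | of_isAtomic h =>
    cases h with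
    | equal t₁ t₂ =>
      simp only [Formula.Realize, realize_bdEqual, elim_cast, elim_apply,
        Ultraproduct.term_realize_cast]
      exact Quotient.eq''
    | rel R ts =>
      simp only [Formula.Realize, realize_rel, elim_cast, elim_apply,
        Ultraproduct.term_realize_cast]
      apply relMap_quotient_mk'
  | imp _ _ ih₁ ih₂ =>
    exact (imp_congr ih₁ ih₂).trans Ultrafilter.eventually_imp.symm

theorem realize_sumElim_ultraproduct_iff {θ : L.Formula (α ⊕ β)} (hθ : θ.IsQF)
    (x : α → ∀ i, K i) (z : β → ∀ i, K i) :
    (θ.Realize (Sum.elim (fun a => (x a : (U : Filter ι).Product K))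
        fun b => (z b : (U : Filter ι).Product K))) ↔
      ∀ᶠ i in U, θ.Realize (Sum.elim (fun a => x a i) fun b => z b i) := by
  have elim_cast : (Sum.elim (fun a => (x a : (U : Filter ι).Product K))
      fun b => (z b : (U : Filter ι).Product K)) =
        fun k => ((Sum.elim x z k : ∀ i, K i) : (U : Filter ι).Product K) := by
    funext k
    cases k <;> rfl
  have elim_apply (i : ι) :
      (Sum.elim (fun a => x a i) fun b => z b i) = fun k => Sum.elim x z k i := by
    funext k
    cases k <;> rfl
  simpa only [elim_cast, elim_apply] using realize_ultraproduct_iff hθ (Sum.elim x z)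

theorem exists_realize_ultraproduct_iff {θ : L.Formula (α ⊕ β)} (hθ : θ.IsQF)
    (x : α → ∀ i, K i) :
    (∃ y : β → (U : Filter ι).Product K,
        θ.Realize (Sum.elim (fun a => (x a : (U : Filter ι).Product K)) y)) ↔
      ∃ z : β → ∀ i, K i, ∀ᶠ i in U, θ.Realize (Sum.elim (fun a => x a i) fun b => z b i) := by
  constructor
  · rintro ⟨y, hy⟩
    obtain ⟨z, rfl⟩ := exists_rep_ultraproduct y
    exact ⟨z, (realize_sumElim_ultraproduct_iff hθ x z).1 hy⟩
  · rintro ⟨z, hz⟩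
    exact ⟨_, (realize_sumElim_ultraproduct_iff hθ x z).2 hz⟩

end

variable {M N : Type*} [L.Structure M] [L.Structure N]

/-- A map preserving the quantifier-free formulas, i.e. making its target a model of the diagram of
its source, as an embedding. -/
def embeddingOfRealize (f : M → N)
    (hf : ∀ φ : L.Formula M, φ.IsQF → φ.Realize id → φ.Realize f) : M ↪[L] N :=
  have realize_iff {φ : L.Formula M} (hφ : φ.IsQF) : φ.Realize f ↔ φ.Realize id :=
    ⟨fun h => by_contra fun h' => hf φ.not hφ.not h' h, hf φ hφ⟩
  { toFun := f
    inj' := fun a b hab => Formula.realize_equal.1 ((realize_iff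
      (φ := (Term.var a).equal (Term.var b)) (IsAtomic.equal _ _).isQF).1
        (Formula.realize_equal.2 hab))
    map_fun' := fun F a => Formula.realize_equal.1 ((realize_iff
      (φ := (Term.var (Structure.funMap F a)).equal (Term.func F fun i => Term.var (a i)))
        (IsAtomic.equal _ _).isQF).2 (Formula.realize_equal.2 rfl))
    map_rel' := fun R a => Formula.realize_rel.symm.trans ((realize_iff
      (φ := R.formula fun i => Term.var (a i)) (IsAtomic.rel _ _).isQF).trans
        Formula.realize_rel) }

variable (L U M) in
/-- The diagonal embedding of a structure into an ultrapower of it. -/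
def diagonalEmbedding : M ↪[L] (U : Filter ι).Product fun _ => M :=
  embeddingOfRealize (fun a => ((fun _ => a : ι → M) : (U : Filter ι).Product fun _ => M))
    fun _ hφ h => (realize_ultraproduct_iff hφ fun a _ => a).2 (.of_forall fun _ => h)

theorem isECEmbedding_diagonalEmbedding : IsECEmbedding (diagonalEmbedding L U M) := by
  refine isECEmbedding_iff.2 fun k a s θ hθ h => ?_
  obtain ⟨z, hz⟩ := (exists_realize_ultraproduct_iff hθ fun i _ => a i).1 h
  obtain ⟨i, hi⟩ := hz.exists
  exact ⟨fun j => z j i, hi⟩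

variable (L U M) in
theorem anETheorySub_ultrapower (n : ℕ) :
    AnETheorySub L n M ((U : Filter ι).Product fun _ => M) := by
  refine anETheorySub_iff.2 fun s θ hθ hM b => ?_
  choose y hy using hM
  obtain ⟨x, rfl⟩ := exists_rep_ultraproduct b
  exact (exists_realize_ultraproduct_iff hθ x).2
    ⟨fun j i => y (fun k => x k i) j, .of_forall fun i => hy _⟩

variable (L U M) in
theorem ultrapower_anETheorySub (n : ℕ) :
    AnETheorySub L n ((U : Filter ι).Product fun _ => M) M :=
  anETheorySub_iff.2 fun s θ hθ hU a =>
    isECEmbedding_iff.1 (isECEmbedding_diagonalEmbedding (U := U)) n a s θ hθ (hU _)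

end Ultraproducts

section Amalgamation

variable {L : FirstOrder.Language.{u, v}} {n : ℕ}

/-- An ultrafilter on the finite subsets of `T` containing every `{F | t ∈ F}`, so that the
corresponding ultrapowers realize finitely satisfiable families of conditions indexed by `T`. -/
noncomputable def finsetUltrafilter (T : Type*) : Ultrafilter (Finset T) :=
  Ultrafilter.of atTop

theorem eventually_mem_finsetUltrafilter {T : Type*} (t : T) :
    ∀ᶠ F in (finsetUltrafilter T : Filter (Finset T)), t ∈ F :=
  Ultrafilter.of_le atTop ((eventually_ge_atTop {t}).mono fun _ => Finset.singleton_subset_iff.1)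

theorem AnETheorySub.exists_exTypeSub {M : Type w} {N : Type*} [L.Structure M] [L.Structure N]
    (H : AnETheorySub L n M N) (b : Fin n → N) :
    ∃ (M' : Type (max u v w x)) (_ : L.Structure M') (c : Fin n → M'),
      AnETheorySub L n M' M ∧ AnETheorySub L n M M' ∧ ExTypeSub L c b := by
  let T : Type (max u v x) := ULift.{x} {t : Σ s : ℕ, L.Formula (Fin n ⊕ Fin s) //
    t.2.IsQF ∧ ¬∃ y : Fin t.1 → N, t.2.Realize (Sum.elim b y)}
  have hfin (F : Finset T) : ∃ a : Fin n → M, ∀ t : F,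
      ¬∃ y : Fin t.1.down.1.1 → M, t.1.down.1.2.Realize (Sum.elim a y) :=
    H.exists_forall_not_realize b (fun t => t.1.down.2.1) fun t => t.1.down.2.2
  choose a ha using hfin
  let U := finsetUltrafilter T
  refine ⟨(U : Filter (Finset T)).Product fun _ => M, inferInstance,
    fun i => ((fun F => a F i : Finset T → M) : (U : Filter (Finset T)).Product fun _ => M),
    ultrapower_anETheorySub L U M n, anETheorySub_ultrapower L U M n, fun s θ hθ hc => ?_⟩
  by_contra hb
  obtain ⟨z, hz⟩ := (exists_realize_ultraproduct_iff hθ fun i F => a F i).1 hc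
  let t : T := ⟨⟨s, θ⟩, hθ, hb⟩
  obtain ⟨F, hF, ht⟩ := (hz.and (eventually_mem_finsetUltrafilter t)).exists
  exact ha F ⟨t, ht⟩ ⟨_, hF⟩

theorem ExTypeSub.exists_amalgam {α : Type y} {M : Type w} {N : Type x} [L.Structure M]
    [L.Structure N] {c : α → M} {b : α → N} (H : ExTypeSub L c b) :
    ∃ (N' : Type (max u v w x y)) (_ : L.Structure N') (h : N ↪[L] N') (f : M ↪[L] N'),
      IsECEmbedding h ∧ f ∘ c = h ∘ b := by
  let T : Type (max u v w y) := {θ : L.Formula (α ⊕ M) // θ.IsQF ∧ θ.Realize (Sum.elim c id)}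
  have hfin (F : Finset T) : ∃ g : M → N, ∀ t : F, t.1.1.Realize (Sum.elim b g) := by
    obtain ⟨g, hg⟩ := H.exists_realize (isQF_iInf fun t : F => t.1.2.1)
      (Formula.realize_iInf.2 fun t : F => t.1.2.2)
    exact ⟨g, Formula.realize_iInf.1 hg⟩
  choose g hg using hfin
  let U := finsetUltrafilter T
  let h : N ↪[L] (U : Filter (Finset T)).Product fun _ => N := diagonalEmbedding L U N
  let f (a : M) : (U : Filter (Finset T)).Product fun _ => N := (fun F => g F a : Finset T → N)
  have hf (θ : L.Formula (α ⊕ M)) (hθ : θ.IsQF) (hc : θ.Realize (Sum.elim c id)) :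
      θ.Realize (Sum.elim (h ∘ b) f) := by
    have hcone : ∀ᶠ F in (U : Filter (Finset T)), θ.Realize (Sum.elim b (g F)) :=
      (eventually_mem_finsetUltrafilter ⟨θ, hθ, hc⟩).mono fun F hF => hg F ⟨_, hF⟩
    exact (realize_sumElim_ultraproduct_iff hθ (fun i _ => b i) fun a F => g F a).2 hcone
  refine ⟨_, inferInstance, h, embeddingOfRealize f fun φ hφ hc => ?_,
    isECEmbedding_diagonalEmbedding, funext fun i => ?_⟩
  · have hφf := hf (φ.relabel Sum.inr) (hφ.relabel _) (Formula.realize_relabel.2 hc)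
    rwa [Formula.realize_relabel, Sum.elim_comp_inr] at hφf
  · exact Formula.realize_equal.1 (hf ((Term.var (Sum.inr (c i))).equal (Term.var (Sum.inl i)))
      (IsAtomic.equal _ _).isQF (Formula.realize_equal.2 rfl))

end Amalgamation

/-- `Th_{∀ₙ∃}(M) ⊆ Th_{∀ₙ∃}(N)` iff for every `n`-tuple `b` from `N` there are an
existentially closed embedding `h : N → N_b`, a structure `M_b` with
`Th_{∀ₙ∃}(M_b) = Th_{∀ₙ∃}(M)`, and an embedding `f : M_b ↪ N_b` whose image contains
`h(b₁), …, h(bₙ)`. -/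
theorem stmt3 {L : FirstOrder.Language.{u, v}} {M : Type w} {N : Type x}
    [L.Structure M] [L.Structure N] (n : ℕ) :
    AnETheorySub L n M N ↔
      ∀ b : Fin n → N,
        ∃ (Nb : Type (max u v w x)) (_ : L.Structure Nb) (h : N ↪[L] Nb) (_ : IsECEmbedding h)
          (Mb : Type (max u v w x)) (_ : L.Structure Mb)
          (_ : AnETheorySub L n Mb M) (_ : AnETheorySub L n M Mb)
          (f : Mb ↪[L] Nb), ∀ i, h (b i) ∈ Set.range f := by
  constructor
  · intro H b
    obtain ⟨Mb, _, c, hMbM, hMMb, hcb⟩ := AnETheorySub.exists_exTypeSub.{u, v, w, x} H b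
    obtain ⟨Nb, _, h, f, hh, hfc⟩ := hcb.exists_amalgam
    exact ⟨Nb, _, h, hh, Mb, _, hMbM, hMMb, f, fun i => ⟨c i, congrFun hfc i⟩⟩
  · intro H
    refine anETheorySub_iff.2 fun s θ hθ hM b => ?_
    obtain ⟨Nb, _, h, hh, Mb, _, -, hMMb, f, hf⟩ := H b
    choose c hc using hf
    have hcb : ExTypeSub L c b := hh.exTypeSub (funext hc)
    exact hcb s θ hθ (anETheorySub_iff.1 hMMb s θ hθ hM c)
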